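/- Let m ≥ 1 be an integer. There exists a constant C = C(m) such that for every continuously differentiable ε : (0,∞) → ℂ with ‖ε‖_{L²} < ∞ and ‖ε‖_{Ḣ¹_m} < ∞, one has the Hardy-type estimate ( 2π·∫₀^∞ (A_θ[ε](r)/r)²·Q(r)²·r dr )^{1/2} ≤ C·‖ε‖_{L²}^{1/2}·‖ε‖_{Ḣ¹_m}^{3/2}. -/

import Mathlib

open MeasureTheory Set Filter

noncomputable section

/-- The Jackiw–Pi vortex `Q(r) = √8 (m+1) r^m / (1 + r^(2m+2))`. -/
def Q (m : ℕ) (r : ℝ) : ℝ :=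
  Real.sqrt 8 * (m + 1) * r ^ m / (1 + r ^ (2 * m + 2))

/-- `A_θ[u](r) = -(1/2) ∫₀^r |u(r')|² r' dr'`. -/
def Atheta (u : ℝ → ℂ) (r : ℝ) : ℝ :=
  -(1 / 2) * ∫ s in (0:ℝ)..r, ‖u s‖ ^ 2 * s

/-- Bilinear version `A_θ[f,g](r) = -(1/2) ∫₀^r Re(conj f g) r' dr'`. -/
def Atheta2 (f g : ℝ → ℂ) (r : ℝ) : ℝ :=
  -(1 / 2) * ∫ s in (0:ℝ)..r, ((starRingEnd ℂ) (f s) * g s).re * s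

/-- `A_t[u](r) = -∫_r^∞ (m + A_θ[u](r')) |u(r')|² / r' dr'`. -/
def At (m : ℕ) (u : ℝ → ℂ) (r : ℝ) : ℝ :=
  -∫ s in Set.Ioi r, ((m : ℝ) + Atheta u s) * ‖u s‖ ^ 2 / s

/-- Squared (2D radial) `L²` norm: `‖u‖² = 2π ∫₀^∞ |u(r)|² r dr`. -/
def L2sq (u : ℝ → ℂ) : ℝ :=
  2 * Real.pi * ∫ r in Set.Ioi (0:ℝ), ‖u r‖ ^ 2 * r

/-- Squared equivariant `Ḣ¹_m` norm. -/
def H1msq (m : ℕ) (u : ℝ → ℂ) : ℝ :=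
  2 * Real.pi * ∫ r in Set.Ioi (0:ℝ), (‖deriv u r‖ ^ 2 + (m : ℝ) ^ 2 * ‖u r‖ ^ 2 / r ^ 2) * r

/-- The energy functional. -/
def Energy (m : ℕ) (u : ℝ → ℂ) : ℝ :=
  2 * Real.pi * ∫ r in Set.Ioi (0:ℝ),
    ((1 / 2) * ‖deriv u r‖ ^ 2
      + (1 / 2) * (((m : ℝ) + Atheta u r) / r) ^ 2 * ‖u r‖ ^ 2
      - (1 / 4) * ‖u r‖ ^ 4) * r

/-- The Chern–Simons–Schrödinger equation at the point `(t, r)`: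
`i ∂_t u - A_t[u] u + ∂_r² u + (1/r) ∂_r u - ((m + A_θ[u])/r)² u + |u|² u = 0`. -/
def CSSeq (m : ℕ) (u : ℝ → ℝ → ℂ) (t r : ℝ) : Prop :=
  Complex.I * deriv (fun s => u s r) t
    - (At m (u t) r : ℂ) * u t r
    + deriv (deriv (u t)) r
    + (1 / (r : ℂ)) * deriv (u t) r
    - ((((m : ℝ) + Atheta (u t) r) / r : ℝ) : ℂ) ^ 2 * u t r
    + ((‖u t r‖ : ℝ) : ℂ) ^ 2 * u t r = 0

/-- A classical `m`-equivariant solution of CSS on the open interval `I`. -/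
structure IsCSS (m : ℕ) (I : Set ℝ) (u : ℝ → ℝ → ℂ) : Prop where
  smooth : ContDiffOn ℝ (⊤ : ℕ∞) (fun p : ℝ × ℝ => u p.1 p.2) (I ×ˢ Set.Ioi (0:ℝ))
  integrable : ∀ t ∈ I, IntegrableOn (fun r => ‖u t r‖ ^ 2 * r) (Set.Ioi (0:ℝ))
  equivariant : ∃ U : ℝ → ℝ × ℝ → ℂ,
    ContDiffOn ℝ (⊤ : ℕ∞) (fun p : ℝ × (ℝ × ℝ) => U p.1 p.2) (I ×ˢ (Set.univ : Set (ℝ × ℝ))) ∧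
    ∀ t ∈ I, ∀ x : ℝ × ℝ, x ≠ 0 →
      U t x = u t (Real.sqrt (x.1 ^ 2 + x.2 ^ 2)) *
        (((x.1 : ℂ) + (x.2 : ℂ) * Complex.I) / ((Real.sqrt (x.1 ^ 2 + x.2 ^ 2) : ℝ) : ℂ)) ^ m
  bounded : ∀ J : Set ℝ, J ⊆ I → IsCompact J → ∃ C : ℝ, ∀ t ∈ J,
    Real.sqrt (L2sq (u t)) + Real.sqrt (H1msq m (u t)) ≤ C
  eq : ∀ t ∈ I, ∀ r : ℝ, 0 < r → CSSeq m u t r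

/-- Tightness: uniformly small mass near spatial infinity. -/
def Tight (I : Set ℝ) (u : ℝ → ℝ → ℂ) : Prop :=
  ∀ η : ℝ, 0 < η → ∃ R : ℝ, ∀ t ∈ I,
    2 * Real.pi * ∫ r in Set.Ioi R, ‖u t r‖ ^ 2 * r < η

/-- The real inner product `(f,g)_r = Re (2π ∫₀^∞ f conj(g) r dr)`. -/
def iprod (f g : ℝ → ℂ) : ℝ :=
  2 * Real.pi * (∫ r in Set.Ioi (0:ℝ), f r * (starRingEnd ℂ) (g r) * (r : ℂ)).re

/-- `ΛQ = r Q' + Q`. -/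
def LamQ (m : ℕ) (r : ℝ) : ℝ := r * deriv (Q m) r + Q m r

/-- The linearized Bogomol'nyi operator `L_Q`. -/
def LQ (m : ℕ) (f : ℝ → ℂ) (r : ℝ) : ℂ :=
  deriv f r - ((((m : ℝ) + Atheta (fun s => (Q m s : ℂ)) r) / r : ℝ) : ℂ) * f r
    - ((2 * Atheta2 (fun s => (Q m s : ℂ)) f r / r : ℝ) : ℂ) * (Q m r : ℂ)

end

/-! The mass `|A_θ[u](r)|` is bounded both by `‖u‖² / 4π` and, since `s ≤ r` inside the integral, by
`r² ‖u/r‖² / 4π`. Interpolating, `A_θ[u](r)² ≲ r³ ‖u‖ ‖u/r‖³`, so that the left-hand side is at most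
a multiple of `‖u‖^{1/2} ‖u/r‖^{3/2}` times the square root of `∫ r² Q² dr`, which is finite because
`r² Q² ≲ 1 / (1 + r²)`. The potential part of the `Ḣ¹_m` norm controls `‖u/r‖` when `m ≥ 1`. -/

lemma sq_le_mul_pow_three {a x y : ℝ} (ha : 0 ≤ a) (hx : 0 ≤ x) (hy : 0 ≤ y)
    (hax : a ≤ x ^ 2) (hay : a ≤ y ^ 2) : a ^ 2 ≤ x * y ^ 3 := by
  refine le_of_sq_le_sq ?_ (by positivity)
  calc (a ^ 2) ^ 2 = a * a ^ 3 := by ring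
    _ ≤ x ^ 2 * (y ^ 2) ^ 3 := by gcongr
    _ = (x * y ^ 3) ^ 2 := by ring

lemma sqrt_mul_mul_pow_three {k x y : ℝ} (hk : 0 ≤ k) (hx : 0 ≤ x) (hy : 0 ≤ y) :
    √(k * (x * y ^ 3)) = √k * x ^ ((1 : ℝ) / 2) * y ^ ((3 : ℝ) / 2) := by
  have sqrt_pow_three : √(y ^ 3) = y ^ ((3 : ℝ) / 2) := by
    rw [Real.sqrt_eq_rpow, ← Real.rpow_natCast, ← Real.rpow_mul hy]
    norm_num
  rw [Real.sqrt_mul hk, Real.sqrt_mul hx, sqrt_pow_three, ← Real.sqrt_eq_rpow, mul_assoc]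

section Atheta

variable {u : ℝ → ℂ} {r : ℝ}

lemma L2sq_nonneg (u : ℝ → ℂ) : 0 ≤ L2sq u :=
  mul_nonneg (by positivity) <| setIntegral_nonneg measurableSet_Ioi fun r (hr : 0 < r) => by
    positivity

lemma norm_div_ofReal_sq (z : ℂ) (r : ℝ) : ‖z / r‖ ^ 2 = ‖z‖ ^ 2 / r ^ 2 := by
  rw [norm_div, Complex.norm_real, div_pow, Real.norm_eq_abs, sq_abs]

lemma abs_Atheta_eq_setIntegral (u : ℝ → ℂ) (hr : 0 ≤ r) :
    |Atheta u r| = 1 / 2 * ∫ s in Ioc 0 r, ‖u s‖ ^ 2 * s := by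
  have mass_nonneg : 0 ≤ ∫ s in Ioc 0 r, ‖u s‖ ^ 2 * s :=
    setIntegral_nonneg measurableSet_Ioc fun s hs => mul_nonneg (sq_nonneg _) hs.1.le
  rw [Atheta, intervalIntegral.integral_of_le hr, abs_mul, abs_of_nonneg mass_nonneg]
  norm_num

lemma abs_Atheta_le_L2sq_div (hu : IntegrableOn (fun s => ‖u s‖ ^ 2 * s) (Ioi 0)) (hr : 0 ≤ r) :
    |Atheta u r| ≤ L2sq u / (4 * Real.pi) := by
  have mass_le : ∫ s in Ioc 0 r, ‖u s‖ ^ 2 * s ≤ ∫ s in Ioi 0, ‖u s‖ ^ 2 * s :=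
    setIntegral_mono_set hu
      (ae_restrict_of_forall_mem measurableSet_Ioi fun s (hs : 0 < s) => by
        simp only [Pi.zero_apply]; positivity)
      (Eventually.of_forall Ioc_subset_Ioi_self)
  calc |Atheta u r| ≤ 1 / 2 * ∫ s in Ioi 0, ‖u s‖ ^ 2 * s := by
        rw [abs_Atheta_eq_setIntegral u hr]; gcongr
    _ = L2sq u / (4 * Real.pi) := by rw [L2sq]; field_simp; ring

lemma abs_Atheta_le_sq_mul_abs_Atheta_div
    (hu : IntegrableOn (fun s => ‖u s / s‖ ^ 2 * s) (Ioc 0 r)) (hr : 0 ≤ r) :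
    |Atheta u r| ≤ r ^ 2 * |Atheta (fun s => u s / s) r| := by
  have mass_le :
      ∫ s in Ioc 0 r, ‖u s‖ ^ 2 * s ≤ ∫ s in Ioc 0 r, r ^ 2 * (‖u s / s‖ ^ 2 * s) := by
    refine integral_mono_of_nonneg
      (ae_restrict_of_forall_mem measurableSet_Ioc fun s hs => mul_nonneg (sq_nonneg _) hs.1.le)
      (hu.const_mul _) (ae_restrict_of_forall_mem measurableSet_Ioc fun s ⟨hs, hsr⟩ => ?_)
    calc ‖u s‖ ^ 2 * s = s ^ 2 * (‖u s / s‖ ^ 2 * s) := by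
          rw [norm_div_ofReal_sq]; field_simp
      _ ≤ r ^ 2 * (‖u s / s‖ ^ 2 * s) := by gcongr
  rw [integral_const_mul] at mass_le
  rw [abs_Atheta_eq_setIntegral u hr, abs_Atheta_eq_setIntegral _ hr]
  linarith

lemma Atheta_sq_le (hu : IntegrableOn (fun s => ‖u s‖ ^ 2 * s) (Ioi 0))
    (hu_div : IntegrableOn (fun s => ‖u s / s‖ ^ 2 * s) (Ioi 0)) (hr : 0 ≤ r) :
    Atheta u r ^ 2 ≤
      r ^ 3 * (√(L2sq u) * √(L2sq fun s => u s / s) ^ 3) / (4 * Real.pi) ^ 2 := by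
  set L := L2sq u
  set B := L2sq fun s => u s / s
  have sq_sqrt_L : √L ^ 2 = L := Real.sq_sqrt (L2sq_nonneg _)
  have sq_sqrt_B : √B ^ 2 = B := Real.sq_sqrt (L2sq_nonneg _)
  have sq_sqrt_pi : √(4 * Real.pi) ^ 2 = 4 * Real.pi := Real.sq_sqrt (by positivity)
  have le_L : |Atheta u r| ≤ (√L / √(4 * Real.pi)) ^ 2 := by
    rw [div_pow, sq_sqrt_L, sq_sqrt_pi]
    exact abs_Atheta_le_L2sq_div hu hr
  have le_B : |Atheta u r| ≤ (r * (√B / √(4 * Real.pi))) ^ 2 := by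
    rw [mul_pow, div_pow, sq_sqrt_B, sq_sqrt_pi]
    refine (abs_Atheta_le_sq_mul_abs_Atheta_div (hu_div.mono_set Ioc_subset_Ioi_self) hr).trans ?_
    gcongr
    exact abs_Atheta_le_L2sq_div hu_div hr
  calc Atheta u r ^ 2 = |Atheta u r| ^ 2 := (sq_abs _).symm
    _ ≤ √L / √(4 * Real.pi) * (r * (√B / √(4 * Real.pi))) ^ 3 :=
      sq_le_mul_pow_three (abs_nonneg _) (by positivity) (by positivity) le_L le_B
    _ = r ^ 3 * (√L * √B ^ 3) / (√(4 * Real.pi) ^ 2) ^ 2 := by field_simp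
    _ = r ^ 3 * (√L * √B ^ 3) / (4 * Real.pi) ^ 2 := by rw [sq_sqrt_pi]

lemma integral_Atheta_div_sq_mul_le {w : ℝ → ℝ}
    (hw : IntegrableOn (fun r => r ^ 2 * w r ^ 2) (Ioi 0))
    (hu : IntegrableOn (fun s => ‖u s‖ ^ 2 * s) (Ioi 0))
    (hu_div : IntegrableOn (fun s => ‖u s / s‖ ^ 2 * s) (Ioi 0)) :
    2 * Real.pi * ∫ r in Ioi 0, (Atheta u r / r) ^ 2 * w r ^ 2 * r ≤
      (∫ r in Ioi 0, r ^ 2 * w r ^ 2) / (8 * Real.pi) *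
        (√(L2sq u) * √(L2sq fun s => u s / s) ^ 3) := by
  set K := √(L2sq u) * √(L2sq fun s => u s / s) ^ 3
  have integral_le : ∫ r in Ioi 0, (Atheta u r / r) ^ 2 * w r ^ 2 * r ≤
      ∫ r in Ioi 0, K / (4 * Real.pi) ^ 2 * (r ^ 2 * w r ^ 2) := by
    refine integral_mono_of_nonneg
      (ae_restrict_of_forall_mem measurableSet_Ioi fun r (hr : 0 < r) => by
        simp only [Pi.zero_apply]; positivity)
      (hw.const_mul _) (ae_restrict_of_forall_mem measurableSet_Ioi fun r (hr : 0 < r) => ?_)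
    calc (Atheta u r / r) ^ 2 * w r ^ 2 * r = Atheta u r ^ 2 * (w r ^ 2 / r) := by field_simp
      _ ≤ r ^ 3 * K / (4 * Real.pi) ^ 2 * (w r ^ 2 / r) := by
        gcongr; exact Atheta_sq_le hu hu_div hr.le
      _ = K / (4 * Real.pi) ^ 2 * (r ^ 2 * w r ^ 2) := by field_simp
  rw [integral_const_mul] at integral_le
  calc _ ≤ 2 * Real.pi * (K / (4 * Real.pi) ^ 2 * ∫ r in Ioi 0, r ^ 2 * w r ^ 2) := by gcongr
    _ = (∫ r in Ioi 0, r ^ 2 * w r ^ 2) / (8 * Real.pi) * K := by field_simp; ring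

end Atheta

lemma sq_le_one_add_pow {r : ℝ} (hr : 0 ≤ r) {n : ℕ} (hn : 2 ≤ n) : r ^ 2 ≤ 1 + r ^ n := by
  rcases le_total r 1 with h | h
  · linarith [pow_le_one₀ (n := 2) hr h, pow_nonneg hr n]
  · linarith [pow_le_pow_right₀ h hn]

lemma sq_mul_Q_sq_le (m : ℕ) {r : ℝ} (hr : 0 ≤ r) :
    r ^ 2 * Q m r ^ 2 ≤ 16 * ((m : ℝ) + 1) ^ 2 * (1 + r ^ 2)⁻¹ := by
  set x := r ^ (2 * m + 2) with hx
  have hx0 : 0 ≤ x := by positivity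
  have sq_le : r ^ 2 ≤ 1 + x := sq_le_one_add_pow hr (by omega)
  have div_le : x / (1 + x) ^ 2 ≤ 2 * (1 + r ^ 2)⁻¹ := by
    rw [← div_eq_mul_inv, div_le_div_iff₀ (by positivity) (by positivity)]
    nlinarith [mul_le_mul_of_nonneg_left sq_le hx0]
  calc r ^ 2 * Q m r ^ 2 = √8 ^ 2 * ((m : ℝ) + 1) ^ 2 * (x / (1 + x) ^ 2) := by
        rw [Q, ← hx, div_pow, ← mul_div_assoc, ← mul_div_assoc]
        congr 1
        rw [hx]
        ring
    _ ≤ 8 * ((m : ℝ) + 1) ^ 2 * (2 * (1 + r ^ 2)⁻¹) := by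
        rw [Real.sq_sqrt (by norm_num)]; gcongr
    _ = 16 * ((m : ℝ) + 1) ^ 2 * (1 + r ^ 2)⁻¹ := by ring

lemma continuous_Q (m : ℕ) : Continuous (Q m) := by
  have denominator_ne_zero (r : ℝ) : 1 + r ^ (2 * m + 2) ≠ 0 := by
    have : 0 ≤ r ^ (2 * m + 2) := Even.pow_nonneg (by simp [parity_simps]) r
    positivity
  exact Continuous.div (by fun_prop) (by fun_prop) denominator_ne_zero

lemma integrableOn_sq_mul_Q_sq (m : ℕ) :
    IntegrableOn (fun r => r ^ 2 * Q m r ^ 2) (Ioi 0) := by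
  refine (integrable_inv_one_add_sq.integrableOn.const_mul (16 * ((m : ℝ) + 1) ^ 2)).mono'
    ((continuous_id.pow 2).mul ((continuous_Q m).pow 2)).aestronglyMeasurable
    (ae_restrict_of_forall_mem measurableSet_Ioi fun r (hr : 0 < r) => ?_)
  rw [Real.norm_of_nonneg (by positivity)]
  exact sq_mul_Q_sq_le m hr.le

lemma integral_sq_mul_Q_sq_le (m : ℕ) :
    ∫ r in Ioi 0, r ^ 2 * Q m r ^ 2 ≤ 8 * Real.pi * ((m : ℝ) + 1) ^ 2 := by
  calc ∫ r in Ioi 0, r ^ 2 * Q m r ^ 2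
      ≤ ∫ r in Ioi (0 : ℝ), 16 * ((m : ℝ) + 1) ^ 2 * (1 + r ^ 2)⁻¹ :=
        setIntegral_mono_on (integrableOn_sq_mul_Q_sq m)
          (integrable_inv_one_add_sq.integrableOn.const_mul _) measurableSet_Ioi
          fun r hr => sq_mul_Q_sq_le m (mem_Ioi.mp hr).le
    _ = 8 * Real.pi * ((m : ℝ) + 1) ^ 2 := by
        rw [integral_const_mul, integral_Ioi_inv_one_add_sq, Real.arctan_zero]
        ring

section Sobolev

variable {m : ℕ} {u : ℝ → ℂ}

lemma norm_div_sq_mul_le_H1m_density (hm : 1 ≤ m) {r : ℝ} (hr : 0 ≤ r) :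
    ‖u r / r‖ ^ 2 * r ≤ (‖deriv u r‖ ^ 2 + (m : ℝ) ^ 2 * ‖u r‖ ^ 2 / r ^ 2) * r := by
  have one_le_m_sq : (1 : ℝ) ≤ (m : ℝ) ^ 2 := one_le_pow₀ (by exact_mod_cast hm)
  gcongr
  calc ‖u r / r‖ ^ 2 = ‖u r‖ ^ 2 / r ^ 2 := norm_div_ofReal_sq _ _
    _ ≤ (m : ℝ) ^ 2 * (‖u r‖ ^ 2 / r ^ 2) := le_mul_of_one_le_left (by positivity) one_le_m_sq
    _ ≤ ‖deriv u r‖ ^ 2 + (m : ℝ) ^ 2 * ‖u r‖ ^ 2 / r ^ 2 := by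
      rw [mul_div_assoc]; exact le_add_of_nonneg_left (sq_nonneg _)

lemma integrableOn_norm_div_sq_mul (hm : 1 ≤ m)
    (hu_meas : AEStronglyMeasurable u (volume.restrict (Ioi 0)))
    (hu : IntegrableOn (fun r => (‖deriv u r‖ ^ 2 + (m : ℝ) ^ 2 * ‖u r‖ ^ 2 / r ^ 2) * r)
      (Ioi 0)) :
    IntegrableOn (fun r => ‖u r / r‖ ^ 2 * r) (Ioi 0) := by
  have div_meas : AEStronglyMeasurable (fun r : ℝ => u r / r) (volume.restrict (Ioi 0)) :=
    (hu_meas.aemeasurable.div Complex.measurable_ofReal.aemeasurable).aestronglyMeasurable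
  refine hu.mono' ((div_meas.norm.pow 2).mul aestronglyMeasurable_id)
    (ae_restrict_of_forall_mem measurableSet_Ioi fun r (hr : 0 < r) => ?_)
  rw [Real.norm_of_nonneg (by positivity)]
  exact norm_div_sq_mul_le_H1m_density hm hr.le

lemma L2sq_div_le_H1msq (hm : 1 ≤ m)
    (hu : IntegrableOn (fun r => (‖deriv u r‖ ^ 2 + (m : ℝ) ^ 2 * ‖u r‖ ^ 2 / r ^ 2) * r)
      (Ioi 0)) :
    L2sq (fun r => u r / r) ≤ H1msq m u := by
  refine mul_le_mul_of_nonneg_left (integral_mono_of_nonneg ?_ hu ?_) (by positivity)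
  · exact ae_restrict_of_forall_mem measurableSet_Ioi fun r hr =>
      mul_nonneg (sq_nonneg _) (mem_Ioi.mp hr).le
  · exact ae_restrict_of_forall_mem measurableSet_Ioi fun r hr =>
      norm_div_sq_mul_le_H1m_density hm (mem_Ioi.mp hr).le

end Sobolev

theorem stmt17_general (m : ℕ) (u : ℝ → ℂ)
    (hu : IntegrableOn (fun r => ‖u r‖ ^ 2 * r) (Ioi 0))
    (hu_div : IntegrableOn (fun r => ‖u r / r‖ ^ 2 * r) (Ioi 0)) :
    √(2 * Real.pi * ∫ r in Ioi 0, (Atheta u r / r) ^ 2 * Q m r ^ 2 * r) ≤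
      (m + 1) * √(L2sq u) ^ ((1 : ℝ) / 2) * √(L2sq fun r => u r / r) ^ ((3 : ℝ) / 2) := by
  have constant_le : (∫ r in Ioi 0, r ^ 2 * Q m r ^ 2) / (8 * Real.pi) ≤ ((m : ℝ) + 1) ^ 2 := by
    rw [div_le_iff₀' (by positivity)]
    exact integral_sq_mul_Q_sq_le m
  calc √(2 * Real.pi * ∫ r in Ioi 0, (Atheta u r / r) ^ 2 * Q m r ^ 2 * r)
      ≤ √(((m : ℝ) + 1) ^ 2 * (√(L2sq u) * √(L2sq fun r => u r / r) ^ 3)) := by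
        refine Real.sqrt_le_sqrt <|
          (integral_Atheta_div_sq_mul_le (integrableOn_sq_mul_Q_sq m) hu hu_div).trans ?_
        gcongr
    _ = _ := by
        rw [sqrt_mul_mul_pow_three (by positivity) (by positivity) (by positivity),
          Real.sqrt_sq (by positivity)]

/-- Hardy-type estimate
`‖(A_θ[ε]/r) Q‖_{L²} ≤ C ‖ε‖_{L²}^{1/2} ‖ε‖_{Ḣ¹_m}^{3/2}`. -/
theorem stmt17 (m : ℕ) (hm : 1 ≤ m) :
    ∃ C : ℝ,
    ∀ ε : ℝ → ℂ, ContDiffOn ℝ 1 ε (Set.Ioi 0) →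
      IntegrableOn (fun r => ‖ε r‖ ^ 2 * r) (Set.Ioi (0:ℝ)) →
      IntegrableOn (fun r => (‖deriv ε r‖ ^ 2 + (m : ℝ) ^ 2 * ‖ε r‖ ^ 2 / r ^ 2) * r)
        (Set.Ioi (0:ℝ)) →
      Real.sqrt (2 * Real.pi * ∫ r in Set.Ioi (0:ℝ),
          (Atheta ε r / r) ^ 2 * Q m r ^ 2 * r)
        ≤ C * Real.sqrt (L2sq ε) ^ ((1 : ℝ) / 2) * Real.sqrt (H1msq m ε) ^ ((3 : ℝ) / 2) := by
  refine ⟨m + 1, fun ε hε hL2 hH1 => ?_⟩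
  have hε_meas : AEStronglyMeasurable ε (volume.restrict (Ioi 0)) :=
    hε.continuousOn.aestronglyMeasurable measurableSet_Ioi
  refine (stmt17_general m ε hL2 (integrableOn_norm_div_sq_mul hm hε_meas hH1)).trans ?_
  gcongr
  exact L2sq_div_le_H1msq hm hH1
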